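/- arXiv:2407.00185 — 2 statements merged into one kernel-verified Lean document; each statement's English description precedes it below -/
import Mathlib

section
/- Let R : ℝ^n × ℝ^m → ℝ^m and d : ℝ^n → ℝ^m be maps such that d is differentiable at P₀, R is differentiable at (P₀, d(P₀)), and R(P, d(P)) = 0 for every P ∈ ℝ^n. Let K be the partial Fréchet derivative of R with respect to its second argument at (P₀, d(P₀)), assumed invertible, and let B be the partial Fréchet derivative of R with respect to its first argument at (P₀, d(P₀)). Let f : ℝ^n × ℝ^m → ℝ be differentiable at (P₀, d(P₀)), and define the reduced objective F : ℝ^n → ℝ by F(P) = f(P, d(P)). Let λ ∈ ℝ^m be the unique vector satisfying Kᵀ λ = −∇_d f(P₀, d(P₀)), where ∇_d f is the gradient of f with respect to its second argument and Kᵀ is the adjoint (transpose) of K. Then F is differentiable at P₀ and for every v ∈ ℝ^n, DF(P₀)[v] = ∂_P f(P₀, d(P₀))[v] + ⟨λ, B v⟩, where ⟨·,·⟩ is the Euclidean inner product on ℝ^m. -/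
open scoped RealInnerProductSpace

/-!
Differentiating the residual equation `R (P, d P) = 0` along the graph of `d` gives
`∂_P R + K ∘ d' = 0`. The chain rule also produces the term `∂_d f ∘ d' = -(λ ∘ K) ∘ d'`, which is
therefore `λ ∘ ∂_P R`: the adjoint equation eliminates the sensitivity `d'`.
-/

section PartialDerivatives

open scoped Topology

variable {𝕜 E F G H : Type*} [NontriviallyNormedField 𝕜]
  [NormedAddCommGroup E] [NormedSpace 𝕜 E] [NormedAddCommGroup F] [NormedSpace 𝕜 F]
  [NormedAddCommGroup G] [NormedSpace 𝕜 G] [NormedAddCommGroup H] [NormedSpace 𝕜 H]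

theorem fderiv_comp_prodMk_left {g : E × F → G} {x : E} {y : F}
    (hg : DifferentiableAt 𝕜 g (x, y)) :
    fderiv 𝕜 (fun x' => g (x', y)) x = fderiv 𝕜 g (x, y) ∘L .inl 𝕜 E F :=
  (hg.hasFDerivAt.comp x (hasFDerivAt_prodMk_left x y)).fderiv

theorem fderiv_comp_prodMk_right {g : E × F → G} {x : E} {y : F}
    (hg : DifferentiableAt 𝕜 g (x, y)) :
    fderiv 𝕜 (fun y' => g (x, y')) y = fderiv 𝕜 g (x, y) ∘L .inr 𝕜 E F :=
  (hg.hasFDerivAt.comp y (hasFDerivAt_prodMk_right x y)).fderiv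

theorem hasFDerivAt_comp_graph {g : E × F → G} {d : E → F} {d' : E →L[𝕜] F} {x : E}
    (hg : DifferentiableAt 𝕜 g (x, d x)) (hd : HasFDerivAt d d' x) :
    HasFDerivAt (fun x' => g (x', d x'))
      (fderiv 𝕜 (fun x' => g (x', d x)) x + fderiv 𝕜 (fun y => g (x, y)) (d x) ∘L d') x := by
  have hgraph : HasFDerivAt (fun x' => (x', d x')) ((ContinuousLinearMap.id 𝕜 E).prod d') x :=
    (hasFDerivAt_id x).prodMk hd
  have hsplit : fderiv 𝕜 (fun x' => g (x', d x)) x + fderiv 𝕜 (fun y => g (x, y)) (d x) ∘L d' =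
      fderiv 𝕜 g (x, d x) ∘L (ContinuousLinearMap.id 𝕜 E).prod d' := by
    rw [fderiv_comp_prodMk_left hg, fderiv_comp_prodMk_right hg]
    exact ContinuousLinearMap.ext fun v =>
      (fderiv 𝕜 g (x, d x)).comp_inl_add_comp_inr (v, d' v)
  exact hsplit ▸ hg.hasFDerivAt.comp x hgraph

theorem fderiv_right_comp_eq_neg_fderiv_left_of_eventually_eq_const {R : E × F → G} {d : E → F}
    {d' : E →L[𝕜] F} {x : E} {c : G} (hR : DifferentiableAt 𝕜 R (x, d x)) (hd : HasFDerivAt d d' x)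
    (hc : ∀ᶠ x' in 𝓝 x, R (x', d x') = c) :
    fderiv 𝕜 (fun y => R (x, y)) (d x) ∘L d' = -fderiv 𝕜 (fun x' => R (x', d x)) x := by
  have hconst : HasFDerivAt (fun x' => R (x', d x')) (0 : E →L[𝕜] G) x :=
    (hasFDerivAt_const c x).congr_of_eventuallyEq hc
  exact eq_neg_of_add_eq_zero_right ((hasFDerivAt_comp_graph hR hd).unique hconst)

theorem adjoint_method_total_derivative_general {R : E × F → G} {d : E → F} {f : E × F → H}
    {P₀ : E} {c : G} (hd : DifferentiableAt 𝕜 d P₀) (hR : DifferentiableAt 𝕜 R (P₀, d P₀))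
    (hres : ∀ᶠ P in 𝓝 P₀, R (P, d P) = c) (hf : DifferentiableAt 𝕜 f (P₀, d P₀))
    {lam : G →L[𝕜] H}
    (hlam : lam ∘L fderiv 𝕜 (fun y => R (P₀, y)) (d P₀) =
      -fderiv 𝕜 (fun y => f (P₀, y)) (d P₀)) :
    HasFDerivAt (fun P => f (P, d P))
      (fderiv 𝕜 (fun P => f (P, d P₀)) P₀ + lam ∘L fderiv 𝕜 (fun P => R (P, d P₀)) P₀) P₀ := by
  set K := fderiv 𝕜 (fun y => R (P₀, y)) (d P₀)
  set B := fderiv 𝕜 (fun P => R (P, d P₀)) P₀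
  have tangent : K ∘L fderiv 𝕜 d P₀ = -B :=
    fderiv_right_comp_eq_neg_fderiv_left_of_eventually_eq_const hR hd.hasFDerivAt hres
  have sensitivity : fderiv 𝕜 (fun y => f (P₀, y)) (d P₀) ∘L fderiv 𝕜 d P₀ = lam ∘L B :=
    calc fderiv 𝕜 (fun y => f (P₀, y)) (d P₀) ∘L fderiv 𝕜 d P₀
      _ = -((lam ∘L K) ∘L fderiv 𝕜 d P₀) := by
        rw [hlam, ContinuousLinearMap.neg_comp, neg_neg]
      _ = -(lam ∘L (K ∘L fderiv 𝕜 d P₀)) := by rw [ContinuousLinearMap.comp_assoc]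
      _ = lam ∘L B := by rw [tangent, ContinuousLinearMap.comp_neg, neg_neg]
  exact sensitivity ▸ hasFDerivAt_comp_graph hf hd.hasFDerivAt

end PartialDerivatives

theorem innerSL_comp_eq_neg_fderiv_of_adjoint_eq_neg_gradient {𝕜 F G : Type*} [RCLike 𝕜]
    [NormedAddCommGroup F] [InnerProductSpace 𝕜 F] [CompleteSpace F]
    [NormedAddCommGroup G] [InnerProductSpace 𝕜 G] [CompleteSpace G]
    {K : F →L[𝕜] G} {φ : F → 𝕜} {y : F} {lam : G}
    (hlam : ContinuousLinearMap.adjoint K lam = -gradient φ y) :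
    innerSL 𝕜 lam ∘L K = -fderiv 𝕜 φ y := by
  ext w
  calc inner 𝕜 lam (K w)
    _ = inner 𝕜 (ContinuousLinearMap.adjoint K lam) w :=
      (ContinuousLinearMap.adjoint_inner_left K w lam).symm
    _ = -fderiv 𝕜 φ y w := by rw [hlam, inner_neg_left, inner_gradient_left]

/-- Adjoint-method total derivative `d_P f = ∂_P f + λᵀ ∂_P R`:
with the state `d(P)` determined by the residual equation `R(P, d(P)) = 0`, invertible tangent
stiffness `K = ∂_d R`, and adjoint variable `λ` solving `Kᵀ λ = -∇_d f`, the reduced objective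
`F(P) = f(P, d(P))` is differentiable at `P₀` and
`DF(P₀)[v] = ∂_P f(P₀, d(P₀))[v] + ⟨λ, B v⟩` for all `v`. -/
theorem adjoint_method_total_derivative {n m : ℕ}
    (R : EuclideanSpace ℝ (Fin n) × EuclideanSpace ℝ (Fin m) → EuclideanSpace ℝ (Fin m))
    (d : EuclideanSpace ℝ (Fin n) → EuclideanSpace ℝ (Fin m))
    (f : EuclideanSpace ℝ (Fin n) × EuclideanSpace ℝ (Fin m) → ℝ)
    (P₀ : EuclideanSpace ℝ (Fin n))
    (hd : DifferentiableAt ℝ d P₀)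
    (hR : DifferentiableAt ℝ R (P₀, d P₀))
    (hres : ∀ P, R (P, d P) = 0)
    (K : EuclideanSpace ℝ (Fin m) ≃L[ℝ] EuclideanSpace ℝ (Fin m))
    (hK : (K : EuclideanSpace ℝ (Fin m) →L[ℝ] EuclideanSpace ℝ (Fin m)) =
      fderiv ℝ (fun y => R (P₀, y)) (d P₀))
    (B : EuclideanSpace ℝ (Fin n) →L[ℝ] EuclideanSpace ℝ (Fin m))
    (hB : B = fderiv ℝ (fun P => R (P, d P₀)) P₀)
    (hf : DifferentiableAt ℝ f (P₀, d P₀))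
    (lam : EuclideanSpace ℝ (Fin m))
    (hlam : ContinuousLinearMap.adjoint
        (K : EuclideanSpace ℝ (Fin m) →L[ℝ] EuclideanSpace ℝ (Fin m)) lam =
      -gradient (fun y => f (P₀, y)) (d P₀)) :
    DifferentiableAt ℝ (fun P => f (P, d P)) P₀ ∧
      ∀ v : EuclideanSpace ℝ (Fin n),
        fderiv ℝ (fun P => f (P, d P)) P₀ v =
          fderiv ℝ (fun P => f (P, d P₀)) P₀ v + ⟪lam, B v⟫ := by
  have hadj := innerSL_comp_eq_neg_fderiv_of_adjoint_eq_neg_gradient hlam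
  rw [hK] at hadj
  have hF := adjoint_method_total_derivative_general hd hR (.of_forall hres) hf hadj
  exact ⟨hF.differentiableAt, fun v => by rw [hF.fderiv, hB]; rfl⟩
end

section
/- Let R_L : ℝ^n × ℝ^k → ℝ^k, R : ℝ^n × ℝ^k × ℝ^m → ℝ^m, f : ℝ^n × ℝ^m → ℝ, ξ : ℝ^n → ℝ^k, and d : ℝ^n → ℝ^m satisfy: ξ and d are differentiable at P₀; R_L is differentiable at (P₀, ξ(P₀)) with R_L(P, ξ(P)) = 0 for all P and with invertible partial derivative A = ∂_ξ R_L at that point; R is differentiable at (P₀, ξ(P₀), d(P₀)) with R(P, ξ(P), d(P)) = 0 for all P and with invertible partial derivative K = ∂_d R at that point; and f is differentiable at (P₀, d(P₀)). Denote C = ∂_P R_L, E = ∂_ξ R, B = ∂_P R at the respective points. Then the reduced objective F(P) = f(P, d(P)) is differentiable at P₀ and DF(P₀) = ∂_P f − ∂_d f ∘ K⁻¹ ∘ (B − E ∘ A⁻¹ ∘ C), where ∂_P f and ∂_d f are the partial Fréchet derivatives of f at (P₀, d(P₀)). -/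
/-!
If `g (x, u x) = c` near `a`, then `(x, y) ↦ (x, g (x, y))` sends `(x, u x)` to `(x, c)`. Inverting
the block triangular derivative of this map on the left gives `Du = -(∂_y g)⁻¹ ∘ ∂_x g`, and in
particular `Dξ = -A⁻¹ ∘ C`. Eliminating `ξ` turns the equilibrium residual into
`(P, y) ↦ R (P, ξ P, y)`, whose partial derivative in `P` is `B + E ∘ Dξ = B - E ∘ A⁻¹ ∘ C`; the
same principle yields `Dd`, and the chain rule gives the derivative of `f (P, d P)`.
-/

open scoped Topology

section

variable {𝕜 X Y Z V W G : Type*} [NontriviallyNormedField 𝕜]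
  [NormedAddCommGroup X] [NormedSpace 𝕜 X] [NormedAddCommGroup Y] [NormedSpace 𝕜 Y]
  [NormedAddCommGroup Z] [NormedSpace 𝕜 Z] [NormedAddCommGroup V] [NormedSpace 𝕜 V]
  [NormedAddCommGroup W] [NormedSpace 𝕜 W] [NormedAddCommGroup G] [NormedSpace 𝕜 G]

theorem hasFDerivAt_coprod_fderiv_partial {g : X × Y → Z} {a : X} {b : Y}
    (hg : DifferentiableAt 𝕜 g (a, b)) :
    HasFDerivAt g
      ((fderiv 𝕜 (fun x => g (x, b)) a).coprod (fderiv 𝕜 (fun y => g (a, y)) b)) (a, b) := by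
  have hleft : HasFDerivAt (fun x => g (x, b)) (fderiv 𝕜 g (a, b) ∘L .inl 𝕜 X Y) a :=
    hg.hasFDerivAt.comp a (hasFDerivAt_prodMk_left a b)
  have hright : HasFDerivAt (fun y => g (a, y)) (fderiv 𝕜 g (a, b) ∘L .inr 𝕜 X Y) b :=
    hg.hasFDerivAt.comp b (hasFDerivAt_prodMk_right a b)
  rw [hleft.fderiv, hright.fderiv, ContinuousLinearMap.coprod_comp_inl_inr]
  exact hg.hasFDerivAt

theorem hasFDerivAt_coprod_coprod_fderiv_partial {g : X × Y × Z → W} {a : X} {b : Y} {c : Z}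
    (hg : DifferentiableAt 𝕜 g (a, b, c)) :
    HasFDerivAt g
      ((fderiv 𝕜 (fun x => g (x, b, c)) a).coprod
        ((fderiv 𝕜 (fun y => g (a, y, c)) b).coprod (fderiv 𝕜 (fun z => g (a, b, z)) c)))
      (a, b, c) := by
  have hslice : DifferentiableAt 𝕜 (fun q => g (a, q)) (b, c) :=
    hg.comp (b, c) (hasFDerivAt_prodMk_right a (b, c)).differentiableAt
  rw [← (hasFDerivAt_coprod_fderiv_partial hslice).fderiv]
  exact hasFDerivAt_coprod_fderiv_partial hg

theorem hasFDerivAt_apply_prodMk {g : X × Y → Z} {u : X → Y} {a : X}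
    {gx : X →L[𝕜] Z} {gy : Y →L[𝕜] Z} {u' : X →L[𝕜] Y}
    (hg : HasFDerivAt g (gx.coprod gy) (a, u a)) (hu : HasFDerivAt u u' a) :
    HasFDerivAt (fun x => g (x, u x)) (gx + gy ∘L u') a :=
  (hg.comp a (f := fun x => (x, u x)) ((hasFDerivAt_id a).prodMk hu)).congr_fderiv
    (by ext v; simp)

theorem hasFDerivAt_apply_prodMk_prodMk {g : X × Y × Z → W} {u : X → Y} {a : X} {z : Z}
    {gx : X →L[𝕜] W} {gy : Y →L[𝕜] W} {gz : Z →L[𝕜] W} {u' : X →L[𝕜] Y}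
    (hg : HasFDerivAt g (gx.coprod (gy.coprod gz)) (a, u a, z)) (hu : HasFDerivAt u u' a) :
    HasFDerivAt (fun p : X × Z => g (p.1, u p.1, p.2)) ((gx + gy ∘L u').coprod gz) (a, z) := by
  have hsubst : HasFDerivAt (fun p : X × Z => (p.1, u p.1, p.2))
      ((ContinuousLinearMap.fst 𝕜 X Z).prod
        ((u' ∘L .fst 𝕜 X Z).prod (.snd 𝕜 X Z))) (a, z) :=
    hasFDerivAt_fst.prodMk ((hu.comp (a, z) hasFDerivAt_fst).prodMk hasFDerivAt_snd)
  exact (hg.comp (a, z) hsubst).congr_fderiv (by ext v <;> simp)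

theorem hasFDerivAt_of_eventually_apply_prodMk_eq {g : X × Y → V} {u : X → Y} {a : X} {c : V}
    {gx : X →L[𝕜] V} {gy : Y →L[𝕜] V} {gyInv : V →L[𝕜] Y} (hu : ContinuousAt u a)
    (hg : HasFDerivAt g (gx.coprod gy) (a, u a)) (hinv : Function.LeftInverse gyInv gy)
    (hc : ∀ᶠ x in 𝓝 a, g (x, u x) = c) :
    HasFDerivAt u (-(gyInv ∘L gx)) a := by
  have hgraph : HasFDerivAt (fun p : X × Y => (p.1, g p))
      ((ContinuousLinearMap.fst 𝕜 X Y).prod (gx.coprod gy)) (a, u a) :=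
    hasFDerivAt_fst.prodMk hg
  have hlevel : (fun p : X × Y => (p.1, g p)) ∘ (fun x => (x, u x)) =ᶠ[𝓝 a] fun x => (x, c) :=
    hc.mono fun x hx => Prod.ext rfl hx
  -- `(v, w) ↦ (v, gx v + gy w)` is block triangular, undone by `(v, z) ↦ (v, gyInv (z - gx v))`.
  have hleft : Function.LeftInverse
      ((ContinuousLinearMap.fst 𝕜 X V).prod
        (gyInv ∘L (.snd 𝕜 X V - gx ∘L .fst 𝕜 X V)))
      ((ContinuousLinearMap.fst 𝕜 X Y).prod (gx.coprod gy)) :=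
    fun p => by simp [hinv p.2]
  have hpair := HasFDerivAt.of_comp_of_leftInverse (continuousAt_id.prodMk hu) hgraph
    (hasFDerivAt_prodMk_left a c) hlevel hleft
  exact hpair.snd.congr_fderiv (by ext v; simp)

theorem hasFDerivAt_of_eventually_coupled_eq {RL : X × Y → V} {R : X × Y × Z → W}
    {ξ : X → Y} {d : X → Z} {a : X} {cL : V} {c : W}
    {C : X →L[𝕜] V} {A : Y →L[𝕜] V} {Ainv : V →L[𝕜] Y}
    {B : X →L[𝕜] W} {E : Y →L[𝕜] W} {K : Z →L[𝕜] W} {Kinv : W →L[𝕜] Z}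
    (hξ : ContinuousAt ξ a) (hd : ContinuousAt d a)
    (hRL : HasFDerivAt RL (C.coprod A) (a, ξ a)) (hA : Function.LeftInverse Ainv A)
    (hresL : ∀ᶠ x in 𝓝 a, RL (x, ξ x) = cL)
    (hR : HasFDerivAt R (B.coprod (E.coprod K)) (a, ξ a, d a)) (hK : Function.LeftInverse Kinv K)
    (hres : ∀ᶠ x in 𝓝 a, R (x, ξ x, d x) = c) :
    HasFDerivAt d (-(Kinv ∘L (B - E ∘L Ainv ∘L C))) a := by
  have hξ' : HasFDerivAt ξ (-(Ainv ∘L C)) a :=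
    hasFDerivAt_of_eventually_apply_prodMk_eq hξ hRL hA hresL
  have hreduced := hasFDerivAt_apply_prodMk_prodMk hR hξ'
  rw [ContinuousLinearMap.comp_neg, ← sub_eq_add_neg] at hreduced
  exact hasFDerivAt_of_eventually_apply_prodMk_eq hd hreduced hK hres

theorem nonmatching_shell_total_derivative_general {RL : X × Y → V} {R : X × Y × Z → W}
    {f : X × Z → G} {ξ : X → Y} {d : X → Z} {P₀ : X} {cL : V} {c : W}
    {C : X →L[𝕜] V} {A : Y →L[𝕜] V} {Ainv : V →L[𝕜] Y}
    {B : X →L[𝕜] W} {E : Y →L[𝕜] W} {K : Z →L[𝕜] W} {Kinv : W →L[𝕜] Z}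
    {fP : X →L[𝕜] G} {fd : Z →L[𝕜] G}
    (hξ : ContinuousAt ξ P₀) (hd : ContinuousAt d P₀)
    (hRL : HasFDerivAt RL (C.coprod A) (P₀, ξ P₀)) (hA : Function.LeftInverse Ainv A)
    (hresL : ∀ᶠ P in 𝓝 P₀, RL (P, ξ P) = cL)
    (hR : HasFDerivAt R (B.coprod (E.coprod K)) (P₀, ξ P₀, d P₀))
    (hK : Function.LeftInverse Kinv K) (hres : ∀ᶠ P in 𝓝 P₀, R (P, ξ P, d P) = c)
    (hf : HasFDerivAt f (fP.coprod fd) (P₀, d P₀)) :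
    HasFDerivAt (fun P => f (P, d P)) (fP - fd ∘L Kinv ∘L (B - E ∘L Ainv ∘L C)) P₀ := by
  rw [sub_eq_add_neg, ← ContinuousLinearMap.comp_neg]
  exact hasFDerivAt_apply_prodMk hf
    (hasFDerivAt_of_eventually_coupled_eq hξ hd hRL hA hresL hR hK hres)

end

/-- Total derivative for shape optimization of non-matching shells with moving intersections:
`d_P f = ∂_P f - ∂_d f ∘ K⁻¹ ∘ (∂_P R - ∂_ξ R ∘ (∂_ξ R_L)⁻¹ ∘ ∂_P R_L)`.
Here `ξ(P)` solves the implicit intersection residual `R_L(P, ξ(P)) = 0` with invertible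
`A = ∂_ξ R_L`, the displacement `d(P)` solves the coupled equilibrium residual
`R(P, ξ(P), d(P)) = 0` with invertible `K = ∂_d R`, and `F(P) = f(P, d(P))` is the reduced
objective. -/
theorem nonmatching_shell_total_derivative {n k m : ℕ}
    (RL : EuclideanSpace ℝ (Fin n) × EuclideanSpace ℝ (Fin k) → EuclideanSpace ℝ (Fin k))
    (R : EuclideanSpace ℝ (Fin n) × EuclideanSpace ℝ (Fin k) × EuclideanSpace ℝ (Fin m) →
      EuclideanSpace ℝ (Fin m))
    (f : EuclideanSpace ℝ (Fin n) × EuclideanSpace ℝ (Fin m) → ℝ)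
    (ξ : EuclideanSpace ℝ (Fin n) → EuclideanSpace ℝ (Fin k))
    (d : EuclideanSpace ℝ (Fin n) → EuclideanSpace ℝ (Fin m))
    (P₀ : EuclideanSpace ℝ (Fin n))
    (hξ : DifferentiableAt ℝ ξ P₀)
    (hd : DifferentiableAt ℝ d P₀)
    (hRL : DifferentiableAt ℝ RL (P₀, ξ P₀))
    (hresL : ∀ P, RL (P, ξ P) = 0)
    (A : EuclideanSpace ℝ (Fin k) ≃L[ℝ] EuclideanSpace ℝ (Fin k))
    (hA : (A : EuclideanSpace ℝ (Fin k) →L[ℝ] EuclideanSpace ℝ (Fin k)) =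
      fderiv ℝ (fun η => RL (P₀, η)) (ξ P₀))
    (hR : DifferentiableAt ℝ R (P₀, ξ P₀, d P₀))
    (hres : ∀ P, R (P, ξ P, d P) = 0)
    (K : EuclideanSpace ℝ (Fin m) ≃L[ℝ] EuclideanSpace ℝ (Fin m))
    (hK : (K : EuclideanSpace ℝ (Fin m) →L[ℝ] EuclideanSpace ℝ (Fin m)) =
      fderiv ℝ (fun y => R (P₀, ξ P₀, y)) (d P₀))
    (hf : DifferentiableAt ℝ f (P₀, d P₀))
    (C : EuclideanSpace ℝ (Fin n) →L[ℝ] EuclideanSpace ℝ (Fin k))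
    (hC : C = fderiv ℝ (fun P => RL (P, ξ P₀)) P₀)
    (E : EuclideanSpace ℝ (Fin k) →L[ℝ] EuclideanSpace ℝ (Fin m))
    (hE : E = fderiv ℝ (fun η => R (P₀, η, d P₀)) (ξ P₀))
    (B : EuclideanSpace ℝ (Fin n) →L[ℝ] EuclideanSpace ℝ (Fin m))
    (hB : B = fderiv ℝ (fun P => R (P, ξ P₀, d P₀)) P₀) :
    DifferentiableAt ℝ (fun P => f (P, d P)) P₀ ∧
      fderiv ℝ (fun P => f (P, d P)) P₀ =
        fderiv ℝ (fun P => f (P, d P₀)) P₀ -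
          (fderiv ℝ (fun y => f (P₀, y)) (d P₀)).comp
            ((K.symm : EuclideanSpace ℝ (Fin m) →L[ℝ] EuclideanSpace ℝ (Fin m)).comp
              (B - E.comp
                ((A.symm : EuclideanSpace ℝ (Fin k) →L[ℝ] EuclideanSpace ℝ (Fin k)).comp C))) := by
  have hF := nonmatching_shell_total_derivative_general
    (A := A.toContinuousLinearMap) (Ainv := A.symm.toContinuousLinearMap)
    (K := K.toContinuousLinearMap) (Kinv := K.symm.toContinuousLinearMap)
    hξ.continuousAt hd.continuousAt
    (hC ▸ hA ▸ hasFDerivAt_coprod_fderiv_partial hRL) A.symm_apply_apply (.of_forall hresL)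
    (hB ▸ hE ▸ hK ▸ hasFDerivAt_coprod_coprod_fderiv_partial hR) K.symm_apply_apply
    (.of_forall hres) (hasFDerivAt_coprod_fderiv_partial hf)
  exact ⟨hF.differentiableAt, hF.fderiv⟩
end
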